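/- Let m, d ∈ ℕ with m, d ≥ 2, N = m^d, and let P be a jittered sampling point set of N points in [0,1)^d. Then E[D*(P)] ≥ (4/(5·e^(8+1/6)·√(2π))) · exp( −32 / (m−1)^((d−1)/2) ) · d · (m−1)^((d−1)/2). -/

import Mathlib

open MeasureTheory ProbabilityTheory Real

noncomputable section

/-- The axis-aligned cube `∏_i [x_i/m, x_i/m + 1/m)` of the `m`-grid partition of `[0,1)^d`. -/
def jitterCube (m d : ℕ) (x : Fin d → Fin m) : Set (Fin d → ℝ) :=
  Set.univ.pi fun i => Set.Ico ((x i : ℝ) / m) ((x i : ℝ) / m + 1 / m)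

/-- The distribution of a jittered sampling point configuration: independently, one point
uniformly distributed in each of the `m^d` cubes. -/
def jitterMeasure (m d : ℕ) : Measure ((Fin d → Fin m) → (Fin d → ℝ)) :=
  Measure.pi fun x => ((m : ENNReal) ^ d) • volume.restrict (jitterCube m d x)

open scoped Classical in
/-- Signed (non-normalized) discrepancy `|P ∩ A| - N·λ(A)` with `N = m^d` of a point
configuration `P`. -/
def jdisc (m d : ℕ) (P : (Fin d → Fin m) → (Fin d → ℝ)) (A : Set (Fin d → ℝ)) : ℝ :=
  ((Finset.univ.filter fun x => P x ∈ A).card : ℝ) - (m : ℝ) ^ d * (volume A).toReal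

/-- The anchored box `[0,y) = ∏_i [0, y_i)`. -/
def anchoredBox (d : ℕ) (y : Fin d → ℝ) : Set (Fin d → ℝ) :=
  Set.univ.pi fun i => Set.Ico 0 (y i)

/-- The (non-normalized) star discrepancy `D*(P) = sup_{y ∈ [0,1)^d} |disc([0,y))|`. -/
def starDisc (m d : ℕ) (P : (Fin d → Fin m) → (Fin d → ℝ)) : ℝ :=
  ⨆ y : {y : Fin d → ℝ // ∀ i, y i ∈ Set.Ico (0 : ℝ) 1}, |jdisc m d P (anchoredBox d y.1)|

/-- The expected star discrepancy of a jittered sampling point set of `m^d` points. -/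
def expStarDisc (m d : ℕ) : ℝ :=
  ∫ P, starDisc m d P ∂(jitterMeasure m d)


open scoped Classical in
lemma jdisc_eq_sum (m d : ℕ) (P : (Fin d → Fin m) → (Fin d → ℝ)) (A : Set (Fin d → ℝ)) :
    jdisc m d P A = (∑ x, if P x ∈ A then (1:ℝ) else 0) - (m:ℝ)^d * (volume A).toReal := by
  simp [jdisc]

lemma measurableSet_anchoredBox (d : ℕ) (y : Fin d → ℝ) : MeasurableSet (anchoredBox d y) :=
  MeasurableSet.univ_pi fun _ => measurableSet_Ico

lemma measurable_jdisc (m d : ℕ) {A : Set (Fin d → ℝ)} (hA : MeasurableSet A) :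
    Measurable fun P : (Fin d → Fin m) → (Fin d → ℝ) => jdisc m d P A := by
  classical
  simp only [jdisc_eq_sum]
  refine Measurable.sub_const (Finset.measurable_sum _ fun x _ => ?_) _
  exact Measurable.ite (measurable_pi_apply x hA) measurable_const measurable_const

lemma volume_anchoredBox (d : ℕ) (y : Fin d → ℝ) (hy : ∀ i, 0 ≤ y i) :
    (volume (anchoredBox d y)).toReal = ∏ i, y i := by
  have := Real.volume_pi_Ico_toReal (a := fun _ : Fin d => (0:ℝ)) (b := y) hy
  simpa [anchoredBox] using this

lemma abs_jdisc_le (m d : ℕ) (P : (Fin d → Fin m) → (Fin d → ℝ)) (y : Fin d → ℝ)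
    (hy : ∀ i, y i ∈ Set.Ico (0 : ℝ) 1) :
    |jdisc m d P (anchoredBox d y)| ≤ (m:ℝ)^d := by
  classical
  rw [jdisc, volume_anchoredBox d y fun i => (hy i).1]
  have h1 : ∏ i, y i ≤ 1 := Finset.prod_le_one (fun i _ => (hy i).1) fun i _ => (hy i).2.le
  have h0 : 0 ≤ ∏ i, y i := Finset.prod_nonneg fun i _ => (hy i).1
  have h2 : ((Finset.univ.filter fun x => P x ∈ anchoredBox d y).card : ℝ) ≤ (m:ℝ)^d := by
    have := Finset.card_filter_le (Finset.univ : Finset (Fin d → Fin m))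
      (fun x => P x ∈ anchoredBox d y)
    simp only [Finset.card_univ, Fintype.card_pi, Fintype.card_fin, Finset.prod_const] at this
    exact_mod_cast this
  have h3 : (0:ℝ) ≤ ((Finset.univ.filter fun x => P x ∈ anchoredBox d y).card : ℝ) :=
    Nat.cast_nonneg _
  have h4 : (0:ℝ) ≤ (m:ℝ)^d := by positivity
  rw [abs_le]
  constructor <;> nlinarith

lemma bdd_jdisc (m d : ℕ) (P : (Fin d → Fin m) → (Fin d → ℝ)) :
    BddAbove (Set.range fun y : {y : Fin d → ℝ // ∀ i, y i ∈ Set.Ico (0 : ℝ) 1} =>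
      |jdisc m d P (anchoredBox d y.1)|) :=
  ⟨(m:ℝ)^d, by rintro _ ⟨y, rfl⟩; exact abs_jdisc_le m d P y.1 y.2⟩

lemma starDisc_eq_countable (m d : ℕ) (P : (Fin d → Fin m) → (Fin d → ℝ)) :
    starDisc m d P = ⨆ q : {q : Fin d → ℚ // ∀ i, (q i : ℝ) ∈ Set.Ico (0 : ℝ) 1},
      |jdisc m d P (anchoredBox d fun i => (q.1 i : ℝ))| := by
  classical
  have hbdd : BddAbove (Set.range fun q : {q : Fin d → ℚ // ∀ i, (q i : ℝ) ∈ Set.Ico (0 : ℝ) 1} =>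
      |jdisc m d P (anchoredBox d fun i => (q.1 i : ℝ))|) :=
    ⟨(m:ℝ)^d, by rintro _ ⟨q, rfl⟩; exact abs_jdisc_le m d P _ q.2⟩
  have : Nonempty {y : Fin d → ℝ // ∀ i, y i ∈ Set.Ico (0 : ℝ) 1} := ⟨⟨fun _ => 0, by simp⟩⟩
  have : Nonempty {q : Fin d → ℚ // ∀ i, (q i : ℝ) ∈ Set.Ico (0 : ℝ) 1} := ⟨⟨fun _ => 0, by simp⟩⟩
  apply le_antisymm
  · refine ciSup_le fun ⟨y, hy⟩ => ?_
    by_cases hpos : ∀ i, 0 < y i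
    · choose u hu1 hu2 hu3 using fun i => Real.exists_seq_rat_strictMono_tendsto (y i)
      let q : ℕ → Fin d → ℚ := fun n i => max (u i n) 0
      have hq0 : ∀ n i, (0:ℝ) ≤ q n i := fun n i => by
        have : (0:ℚ) ≤ q n i := le_max_right _ _
        exact_mod_cast this
      have hqlt : ∀ n i, (q n i : ℝ) < y i := fun n i => by
        simp only [q, Rat.cast_max, Rat.cast_zero]
        exact max_lt (hu2 i n) (hpos i)
      have hqt : ∀ i, Filter.Tendsto (fun n => (q n i : ℝ)) Filter.atTop (nhds (y i)) := fun i => by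
        have := (hu3 i).max (tendsto_const_nhds (x := (0:ℝ)))
        rw [max_eq_left (hpos i).le] at this
        simpa [q] using this
      have hlim : Filter.Tendsto (fun n => |jdisc m d P (anchoredBox d fun i => (q n i : ℝ))|)
          Filter.atTop (nhds |jdisc m d P (anchoredBox d y)|) := by
        apply Filter.Tendsto.abs
        simp only [jdisc_eq_sum]
        rw [volume_anchoredBox d y fun i => (hpos i).le]
        simp only [fun n => volume_anchoredBox d (fun i => (q n i : ℝ)) (hq0 n)]
        refine Filter.Tendsto.sub (tendsto_finsetSum _ fun x _ => ?_)
          ((tendsto_finsetProd _ fun i _ => hqt i).const_mul _)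
        apply tendsto_const_nhds.congr'
        have : ∀ᶠ n in Filter.atTop, ∀ i, P x i < y i → P x i < q n i := by
          rw [Filter.eventually_all]
          intro i
          by_cases h : P x i < y i
          · filter_upwards [(hqt i).eventually (lt_mem_nhds h)] with n hn _ using hn
          · exact Filter.Eventually.of_forall fun n h' => absurd h' h
        filter_upwards [this] with n hn
        congr 1
        simp only [anchoredBox, Set.mem_univ_pi, Set.mem_Ico, eq_iff_iff]
        exact ⟨fun h i => ⟨(h i).1, hn i (h i).2⟩, fun h i => ⟨(h i).1, (h i).2.trans (hqlt n i)⟩⟩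
      refine le_of_tendsto' hlim fun n => ?_
      exact le_ciSup hbdd ⟨q n, fun i => ⟨hq0 n i, (hqlt n i).trans (hy i).2⟩⟩
    · push Not at hpos
      obtain ⟨i, hi⟩ := hpos
      have : anchoredBox d y = ∅ := by
        rw [anchoredBox, Set.univ_pi_eq_empty_iff]
        exact ⟨i, by simp [hi]⟩
      simp only [this, jdisc]
      simp only [Set.mem_empty_iff_false, Finset.filter_false, Finset.card_empty, Nat.cast_zero,
        measure_empty, ENNReal.toReal_zero, mul_zero, sub_zero, abs_zero]
      exact Real.iSup_nonneg fun _ => abs_nonneg _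
  · exact ciSup_le fun q => le_ciSup (bdd_jdisc m d P) ⟨fun i => (q.1 i : ℝ), q.2⟩

lemma measurable_starDisc (m d : ℕ) : Measurable (starDisc m d) := by
  have : starDisc m d = fun P => ⨆ q : {q : Fin d → ℚ // ∀ i, (q i : ℝ) ∈ Set.Ico (0 : ℝ) 1},
      |jdisc m d P (anchoredBox d fun i => (q.1 i : ℝ))| := funext (starDisc_eq_countable m d)
  rw [this]
  refine Measurable.iSup fun q => ?_
  exact measurable_abs.comp (measurable_jdisc m d (measurableSet_anchoredBox _ _))

lemma starDisc_bounds (m d : ℕ) (P : (Fin d → Fin m) → (Fin d → ℝ)) :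
    0 ≤ starDisc m d P ∧ starDisc m d P ≤ (m:ℝ)^d := by
  have : Nonempty {y : Fin d → ℝ // ∀ i, y i ∈ Set.Ico (0 : ℝ) 1} := ⟨⟨fun _ => 0, by simp⟩⟩
  exact ⟨Real.iSup_nonneg fun _ => abs_nonneg _, ciSup_le fun y => abs_jdisc_le m d P y.1 y.2⟩

/-- The one-point distribution. -/
def cubeMeasure (m d : ℕ) (x : Fin d → Fin m) : Measure (Fin d → ℝ) :=
  ((m : ENNReal) ^ d) • volume.restrict (jitterCube m d x)

lemma measurableSet_jitterCube (m d : ℕ) (x : Fin d → Fin m) : MeasurableSet (jitterCube m d x) :=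
  MeasurableSet.univ_pi fun _ => measurableSet_Ico

lemma cubeMeasure_ae (m d : ℕ) (x : Fin d → Fin m) :
    ∀ᵐ p ∂cubeMeasure m d x, p ∈ jitterCube m d x :=
  Measure.ae_smul_measure (ae_restrict_mem (measurableSet_jitterCube m d x)) _

lemma cubeMeasure_prob (m d : ℕ) (hm : 2 ≤ m) (x : Fin d → Fin m) :
    IsProbabilityMeasure (cubeMeasure m d x) := by
  constructor
  rw [cubeMeasure, Measure.smul_apply, Measure.restrict_apply_univ, jitterCube, Real.volume_pi_Ico]
  have hm0 : (0:ℝ) < m := by exact_mod_cast (by omega : 0 < m)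
  simp only [add_sub_cancel_left, Finset.prod_const, Finset.card_univ, Fintype.card_fin, smul_eq_mul]
  rw [← mul_pow, one_div, ENNReal.ofReal_inv_of_pos hm0, ENNReal.ofReal_natCast,
    ENNReal.mul_inv_cancel, one_pow]
  · simp; omega
  · simp

lemma cubeMeasure_half (m d : ℕ) (hm : 2 ≤ m) (x : Fin d → Fin m) (i : Fin d) :
    (cubeMeasure m d x).real {p | p i < (x i : ℝ) / m + 1 / (2 * m)} = 1 / 2 := by
  have hm0 : (0:ℝ) < m := by exact_mod_cast (by omega : 0 < m)
  have hset : {p : Fin d → ℝ | p i < (x i : ℝ) / m + 1 / (2 * m)} ∩ jitterCube m d x =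
      Set.univ.pi fun j => Set.Ico ((x j : ℝ) / m)
        ((x j : ℝ) / m + (if j = i then 1 / (2 * (m:ℝ)) else 1 / (m:ℝ))) := by
    have hlt : 1 / (2 * (m:ℝ)) ≤ 1 / m := by
      apply one_div_le_one_div_of_le hm0; linarith
    ext p
    simp only [jitterCube, Set.mem_inter_iff, Set.mem_ofPred_eq, Set.mem_univ_pi, Set.mem_Ico]
    constructor
    · rintro ⟨h1, h2⟩ j
      refine ⟨(h2 j).1, ?_⟩
      split_ifs with h
      · subst h; exact h1
      · exact (h2 j).2
    · intro h
      refine ⟨by simpa using (h i).2, fun j => ⟨(h j).1, (h j).2.trans_le ?_⟩⟩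
      split_ifs <;> linarith
  rw [cubeMeasure, measureReal_def, Measure.smul_apply, Measure.restrict_apply
    (measurableSet_lt (measurable_pi_apply i) measurable_const), hset, smul_eq_mul,
    ENNReal.toReal_mul, Real.volume_pi_Ico_toReal]
  · have hd : d = (d - 1) + 1 := by have := i.2; omega
    simp only [add_sub_cancel_left]
    rw [Fintype.prod_eq_mul_prod_compl i, if_pos rfl, Finset.prod_congr rfl
      (g := fun _ => 1 / (m:ℝ)) (fun j hj => if_neg (by simpa using hj)), Finset.prod_const,
      Finset.card_compl, Finset.card_singleton, Fintype.card_fin, ENNReal.toReal_pow,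
      ENNReal.toReal_natCast]
    obtain ⟨k, rfl⟩ : ∃ k, d = k + 1 := ⟨_, hd⟩
    simp only [Nat.add_sub_cancel]
    rw [one_div_pow, pow_succ]
    field_simp
  · intro j
    show (x j : ℝ) / m ≤ (x j : ℝ) / m + (if j = i then 1 / (2 * (m:ℝ)) else 1 / (m:ℝ))
    have : (0:ℝ) ≤ (if j = i then 1 / (2 * (m:ℝ)) else 1 / (m:ℝ)) := by split_ifs <;> positivity
    linarith

lemma floor_of_mem_jitterCube (m d : ℕ) (hm : 2 ≤ m) (x : Fin d → Fin m) (p : Fin d → ℝ)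
    (hp : p ∈ jitterCube m d x) (i : Fin d) : ⌊(m:ℝ) * p i⌋₊ = (x i : ℕ) := by
  have hm0 : (0:ℝ) < m := by exact_mod_cast (by omega : 0 < m)
  have h := hp i (Set.mem_univ i)
  have h1 := h.1
  have h2 := h.2
  rw [← add_div, lt_div_iff₀ hm0] at h2
  rw [div_le_iff₀ hm0] at h1
  rw [Nat.floor_eq_iff (le_trans (Nat.cast_nonneg _) (h1.trans_eq (mul_comm _ _)))]
  constructor <;> linarith

lemma sum_cubeMeasure (m d : ℕ) (hm : 2 ≤ m) (A : Set (Fin d → ℝ)) (hA : MeasurableSet A)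
    (hsub : ∀ p ∈ A, ∀ i, p i ∈ Set.Ico (0:ℝ) 1) :
    (m:ℝ)^d * (volume A).toReal = ∑ x, (cubeMeasure m d x).real A := by
  have hm0 : (0:ℝ) < m := by exact_mod_cast (by omega : 0 < m)
  have hU : A = ⋃ x : Fin d → Fin m, A ∩ jitterCube m d x := by
    ext p
    simp only [Set.mem_iUnion, Set.mem_inter_iff]
    refine ⟨fun h => ?_, fun ⟨_, h, _⟩ => h⟩
    have hb := hsub p h
    refine ⟨fun i => ⟨⌊(m:ℝ) * p i⌋₊, ?_⟩, h, ?_⟩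
    · rw [Nat.floor_lt (mul_nonneg hm0.le (hb i).1)]
      nlinarith [(hb i).2]
    · intro i _
      have h1 := Nat.floor_le (mul_nonneg hm0.le (hb i).1)
      have h2 := Nat.lt_floor_add_one ((m:ℝ) * p i)
      simp only [Set.mem_Ico]
      rw [← add_div, lt_div_iff₀ hm0, div_le_iff₀ hm0]
      constructor <;> linarith
  have hvol : volume A = ∑ x : Fin d → Fin m, volume (A ∩ jitterCube m d x) := by
    conv_lhs => rw [hU]
    rw [measure_iUnion, tsum_fintype]
    · intro x y hxy
      refine Set.disjoint_left.2 fun p hpx hpy => hxy (funext fun i => Fin.ext ?_)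
      rw [← floor_of_mem_jitterCube m d hm x p hpx.2, floor_of_mem_jitterCube m d hm y p hpy.2]
    · exact fun x => hA.inter (measurableSet_jitterCube m d x)
  have hν : ∀ x, (cubeMeasure m d x) A = (m : ENNReal)^d * volume (A ∩ jitterCube m d x) := fun x => by
    rw [cubeMeasure, Measure.smul_apply, Measure.restrict_apply hA, smul_eq_mul]
  have hsum : (m : ENNReal)^d * volume A = ∑ x, (cubeMeasure m d x) A := by
    simp only [hν]
    rw [hvol, Finset.mul_sum]
  have := congrArg ENNReal.toReal hsum
  have hp := cubeMeasure_prob m d hm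
  rw [ENNReal.toReal_mul, ENNReal.toReal_pow, ENNReal.toReal_natCast,
    ENNReal.toReal_sum (fun x _ => measure_ne_top _ _)] at this
  exact this

lemma integral_indep_zero {ι E : Type*} [Fintype ι] [DecidableEq ι] [MeasurableSpace E] [Inhabited E]
    (ν : ι → Measure E) [∀ i, IsProbabilityMeasure (ν i)] (x : ι) (F : (ι → E) → ℝ)
    (hF : Measurable F) (hFx : ∀ P p, F (Function.update P x p) = F P)
    (g : E → ℝ) (hg : Measurable g) (h0 : ∫ p, g p ∂(ν x) = 0) :
    ∫ P, F P * g (P x) ∂(Measure.pi ν) = 0 := by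
  have hi : iIndepFun (fun i (P : ι → E) => P i) (Measure.pi ν) :=
    iIndepFun_pi (X := fun _ => id) (fun _ => aemeasurable_id)
  have h2 := hi.indepFun_finset (Finset.univ.erase x) {x}
    (Finset.disjoint_singleton_right.2 (Finset.notMem_erase _ _)) (fun i => measurable_pi_apply i)
  let ext : (↥(Finset.univ.erase x) → E) → (ι → E) :=
    fun q i => if h : i ∈ Finset.univ.erase x then q ⟨i, h⟩ else default
  have hext : Measurable ext := by
    refine measurable_pi_lambda _ fun i => ?_
    by_cases h : i ∈ Finset.univ.erase x
    · simp only [ext, h, dif_pos]; exact measurable_pi_apply _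
    · simp only [ext, h, dif_neg, not_false_eq_true]; exact measurable_const
  have h3 := h2.comp (φ := fun q => F (ext q))
    (ψ := fun q : (↥({x} : Finset ι) → E) => g (q ⟨x, Finset.mem_singleton_self x⟩))
    (hF.comp hext) (hg.comp (measurable_pi_apply _))
  have hFe : ∀ P : ι → E, F (ext fun i => P i) = F P := fun P => by
    rw [← hFx (ext fun i => P i) (P x)]
    congr 1
    funext i
    by_cases h : i = x
    · subst h; simp
    · simp [ext, h]
  have h4 := h3.integral_fun_mul_eq_mul_integral
    ((hF.comp hext).comp (measurable_pi_lambda _ fun i => measurable_pi_apply _)).aestronglyMeasurable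
    (hg.comp (measurable_pi_apply x)).aestronglyMeasurable
  have h5 : ∫ P : ι → E, g (P x) ∂(Measure.pi ν) = 0 := by
    rw [← h0, ← (measurePreserving_eval ν x).map_eq, integral_map (measurable_pi_apply x).aemeasurable
      hg.aestronglyMeasurable]
  simp only [Function.comp_apply, hFe] at h4
  rw [h4, h5, mul_zero]

lemma one_sub_cos_le_abs (y : ℝ) : 1 - Real.cos y ≤ |y| := by
  by_cases h : |y| ≤ 2
  · have := Real.one_sub_sq_div_two_le_cos (x := y)
    nlinarith [sq_abs y, abs_nonneg y]
  · linarith [Real.neg_one_le_cos y]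

lemma khinchine_pi {ι E : Type*} [Fintype ι] [DecidableEq ι] [MeasurableSpace E]
    (ν : ι → Measure E) [∀ i, IsProbabilityMeasure (ν i)] (S : Finset ι) (s : E → ℝ)
    (hs : Measurable s) (hs1 : ∀ p, s p = 1 ∨ s p = -1) (h0 : ∀ x ∈ S, ∫ p, s p ∂(ν x) = 0) :
    Real.sqrt S.card / 6 ≤ ∫ P, |∑ x ∈ S, s (P x)| ∂(Measure.pi ν) := by
  rcases Nat.eq_zero_or_pos S.card with hz | hpos
  · rw [hz]; simp only [Nat.cast_zero, Real.sqrt_zero, zero_div]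
    exact integral_nonneg fun _ => abs_nonneg _
  have hM : (1:ℝ) ≤ S.card := by exact_mod_cast hpos
  set M : ℝ := (S.card : ℝ) with hMdef
  have hsq : 1 ≤ Real.sqrt M := Real.one_le_sqrt.2 hM
  set t : ℝ := 1 / Real.sqrt M with ht
  have ht0 : 0 < t := by positivity
  have ht1 : t ≤ 1 := by rw [ht, div_le_one (by positivity)]; exact hsq
  have htM : M * t ^ 2 = 1 := by
    rw [ht, div_pow, one_pow, Real.sq_sqrt (by linarith)]; field_simp
  have hmS : Measurable fun P : ι → E => ∑ x ∈ S, s (P x) :=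
    Finset.measurable_sum _ fun x _ => hs.comp (measurable_pi_apply x)
  have hsb : ∀ p, |s p| = 1 := fun p => by rcases hs1 p with h | h <;> simp [h]
  -- characteristic function
  have hchar : ∫ P, Complex.exp (((t * ∑ x ∈ S, s (P x) : ℝ) : ℂ) * Complex.I) ∂(Measure.pi ν)
      = (Real.cos t : ℂ) ^ S.card := by
    have e1 : ∀ P : ι → E, Complex.exp (((t * ∑ x ∈ S, s (P x) : ℝ) : ℂ) * Complex.I) =
        ∏ x, (fun x p => if x ∈ S then Complex.exp (((t * s p : ℝ) : ℂ) * Complex.I) else 1) x (P x) := by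
      intro P
      simp only [Finset.prod_ite_mem, Finset.univ_inter]
      rw [← Complex.exp_sum, ← Finset.sum_mul, Finset.mul_sum]
      push_cast
      rfl
    simp only [e1]
    rw [integral_fintype_prod_eq_prod (μ := ν) (f := fun x p =>
      if x ∈ S then Complex.exp (((t * s p : ℝ) : ℂ) * Complex.I) else 1)]
    have e2 : ∀ x, ∫ p, (if x ∈ S then Complex.exp (((t * s p : ℝ) : ℂ) * Complex.I) else 1) ∂(ν x) =
        if x ∈ S then (Real.cos t : ℂ) else 1 := by
      intro x
      split_ifs with hx
      · have e3 : ∀ p, Complex.exp (((t * s p : ℝ) : ℂ) * Complex.I) =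
            (Real.cos t : ℂ) + (s p : ℂ) * ((Real.sin t : ℂ) * Complex.I) := by
          intro p
          rcases hs1 p with h | h
          · rw [h, mul_one, Complex.exp_mul_I]; push_cast; ring
          · rw [h, Complex.exp_mul_I]; push_cast
            rw [mul_neg, mul_one, Complex.cos_neg, Complex.sin_neg]; ring
        simp only [e3]
        have h_intble : Integrable (fun p => (s p : ℂ)) (ν x) := by
          refine Integrable.of_bound (C := 1)
            (Complex.measurable_ofReal.comp hs).aestronglyMeasurable ?_
          exact Filter.Eventually.of_forall fun p => by simp [hsb]
        rw [integral_add (integrable_const _) (h_intble.mul_const _), integral_mul_const,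
          integral_complex_ofReal (f := s), h0 x hx]
        simp
      · simp
    simp only [e2]
    simp [Finset.prod_ite_mem]
  have hcos : ∫ P, Real.cos (t * ∑ x ∈ S, s (P x)) ∂(Measure.pi ν) = Real.cos t ^ S.card := by
    have h_intble : Integrable (fun P : ι → E =>
        Complex.exp (((t * ∑ x ∈ S, s (P x) : ℝ) : ℂ) * Complex.I)) (Measure.pi ν) := by
      refine Integrable.of_bound (C := 1) ?_ ?_
      · exact (Complex.measurable_exp.comp
          ((Complex.measurable_ofReal.comp (hmS.const_mul t)).mul_const _)).aestronglyMeasurable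
      · exact Filter.Eventually.of_forall fun p => by rw [Complex.norm_exp_ofReal_mul_I]
    have := congrArg Complex.re hchar
    rw [← RCLike.re_eq_complex_re, ← integral_re h_intble] at this
    simp only [RCLike.re_eq_complex_re, Complex.exp_ofReal_mul_I_re] at this
    rw [this]
    norm_cast
  have hintabs : Integrable (fun P : ι → E => |∑ x ∈ S, s (P x)|) (Measure.pi ν) := by
    refine Integrable.of_bound (C := M) (measurable_abs.comp hmS).aestronglyMeasurable ?_
    refine Filter.Eventually.of_forall fun P => ?_
    rw [Real.norm_eq_abs, abs_abs]
    refine (Finset.abs_sum_le_sum_abs _ _).trans ?_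
    simp [hsb, hMdef]
  have hintcos : Integrable (fun P : ι → E => Real.cos (t * ∑ x ∈ S, s (P x))) (Measure.pi ν) := by
    refine Integrable.of_bound (C := 1)
      (Real.measurable_cos.comp (hmS.const_mul t)).aestronglyMeasurable ?_
    exact Filter.Eventually.of_forall fun P => Real.abs_cos_le_one _
  have key : 1 - Real.cos t ^ S.card ≤ t * ∫ P, |∑ x ∈ S, s (P x)| ∂(Measure.pi ν) := by
    rw [← hcos, ← integral_const_mul]
    have : (1:ℝ) = ∫ P : ι → E, (1:ℝ) ∂(Measure.pi ν) := by simp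
    rw [this, ← integral_sub (integrable_const _) hintcos]
    refine integral_mono ((integrable_const _).sub hintcos) (hintabs.const_mul t) fun P => ?_
    have := one_sub_cos_le_abs (t * ∑ x ∈ S, s (P x))
    rwa [abs_mul, abs_of_pos ht0] at this
  have hpow : Real.cos t ^ S.card ≤ 5 / 6 := by
    have hc := Real.cos_le_one_sub_mul_cos_sq (x := t)
      (by rw [abs_of_pos ht0]; linarith [Real.pi_gt_three])
    have hpi : Real.pi ^ 2 < 10 := by nlinarith [Real.pi_lt_d2, Real.pi_gt_three]
    have hpi' : (1:ℝ) / 5 ≤ 2 / Real.pi ^ 2 := by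
      rw [div_le_div_iff₀ (by norm_num) (by positivity)]; linarith
    have hc2 : Real.cos t ≤ Real.exp (-(1/5 * t ^ 2)) := by
      have := Real.add_one_le_exp (-(1/5 * t ^ 2))
      nlinarith [sq_nonneg t]
    have hc0 : 0 ≤ Real.cos t := Real.cos_nonneg_of_neg_pi_div_two_le_of_le
      (by linarith [Real.pi_gt_three]) (by linarith [Real.pi_gt_three])
    calc Real.cos t ^ S.card ≤ Real.exp (-(1/5 * t ^ 2)) ^ S.card := pow_le_pow_left₀ hc0 hc2 _
      _ = Real.exp (-(1/5)) := by
        rw [← Real.exp_nat_mul, ← hMdef]; congr 1; linear_combination (-1/5) * htM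
      _ ≤ 5 / 6 := by
        rw [Real.exp_neg, inv_le_comm₀ (Real.exp_pos _) (by norm_num)]
        have := Real.add_one_le_exp (1/5 : ℝ)
        norm_num at this ⊢; linarith
  have h6 : 1 / 6 ≤ t * ∫ P, |∑ x ∈ S, s (P x)| ∂(Measure.pi ν) := by linarith
  rw [ht, one_div_mul_eq_div, le_div_iff₀ (by positivity)] at h6
  linarith

/-- The cubes touching the upper boundary exactly in direction `i`. -/
def slab (m d : ℕ) (i : Fin d) : Finset (Fin d → Fin m) :=
  Finset.univ.filter fun x => (x i : ℕ) = m - 1 ∧ ∀ j, j ≠ i → (x j : ℕ) ≠ m - 1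

lemma card_slab (m d : ℕ) (hm : 2 ≤ m) (i : Fin d) : (slab m d i).card = (m - 1) ^ (d - 1) := by
  classical
  let l : Fin m := ⟨m - 1, by omega⟩
  have : slab m d i = Fintype.piFinset fun j => if j = i then {l} else Finset.univ.erase l := by
    ext x
    simp only [slab, Finset.mem_filter, Finset.mem_univ, true_and, Fintype.mem_piFinset]
    constructor
    · rintro ⟨h1, h2⟩ j
      split_ifs with h
      · subst h; simp [Fin.ext_iff, l, h1]
      · simp [Fin.ext_iff, l, h2 j h]
    · intro h
      refine ⟨by simpa [Fin.ext_iff, l] using h i, fun j hj => ?_⟩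
      simpa [Fin.ext_iff, l, hj] using h j
  rw [this, Fintype.card_piFinset, Fintype.prod_eq_mul_prod_compl i, if_pos rfl,
    Finset.card_singleton, one_mul, Finset.prod_congr rfl (g := fun _ => m - 1)
    (fun j hj => by rw [if_neg (by simpa using hj)]; simp), Finset.prod_const, Finset.card_compl,
    Finset.card_singleton, Fintype.card_fin]

/-- Middle of the last layer. -/
def midpt (m : ℕ) : ℝ := ((m - 1 : ℕ) : ℝ) / m + 1 / (2 * m)

/-- Upper corner of the box selected by `c`. -/
def corner (m d : ℕ) (c : Fin d → Bool) : Fin d → ℝ :=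
  fun i => if c i then midpt m else ((m - 1 : ℕ) : ℝ) / m

lemma corner_mem (m d : ℕ) (hm : 2 ≤ m) (c : Fin d → Bool) (i : Fin d) :
    corner m d c i ∈ Set.Ico (0:ℝ) 1 := by
  have hm0 : (0:ℝ) < m := by exact_mod_cast (by omega : 0 < m)
  have h1 : ((m - 1 : ℕ) : ℝ) = m - 1 := by rw [Nat.cast_sub (by omega)]; simp
  have h3 : ((m:ℝ) - 1) / m = 1 - 1 / m := by field_simp
  have h4 : 1 / (2 * (m:ℝ)) = (1 / m) / 2 := by field_simp
  have h5 : 0 < 1 / (m:ℝ) := by positivity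
  have h6 : 1 / (m:ℝ) ≤ 1 := by
    rw [div_le_one hm0]; exact_mod_cast (by omega : 1 ≤ m)
  simp only [corner, midpt, Set.mem_Ico, h1, h3, h4]
  split_ifs <;> constructor <;> linarith

/-- The sign (±1) of a point with respect to the midpoint in direction `i`. -/
def sgn (m d : ℕ) (i : Fin d) (p : Fin d → ℝ) : ℝ := if p i < midpt m then 1 else -1

lemma measurable_sgn (m d : ℕ) (i : Fin d) : Measurable (sgn m d i) :=
  Measurable.ite (measurableSet_lt (measurable_pi_apply i) measurable_const)
    measurable_const measurable_const

lemma abs_sgn (m d : ℕ) (i : Fin d) (p : Fin d → ℝ) : |sgn m d i p| = 1 := by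
  unfold sgn; split_ifs <;> simp

/-- slab imbalance -/
def imb (m d : ℕ) (i : Fin d) (P : (Fin d → Fin m) → (Fin d → ℝ)) : ℝ :=
  ∑ x ∈ slab m d i, sgn m d i (P x)

lemma measurable_imb (m d : ℕ) (i : Fin d) : Measurable (imb m d i) :=
  Finset.measurable_sum _ fun x _ => (measurable_sgn m d i).comp (measurable_pi_apply x)

/-- the choice of corner -/
def choice (m d : ℕ) (P : (Fin d → Fin m) → (Fin d → ℝ)) : Fin d → Bool :=
  fun i => decide (0 < imb m d i P)

lemma measurable_choice (m d : ℕ) : Measurable (choice m d) := by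
  refine measurable_pi_lambda _ fun i => ?_
  refine measurable_to_bool ?_
  have : (fun P => choice m d P i) ⁻¹' {true} = {P | 0 < imb m d i P} := by
    ext P; simp [choice]
  rw [this]
  exact measurableSet_lt measurable_const (measurable_imb m d i)

open scoped Classical in
/-- centered indicator -/
def cind (m d : ℕ) (x : Fin d → Fin m) (c : Fin d → Bool) (p : Fin d → ℝ) : ℝ :=
  (if p ∈ anchoredBox d (corner m d c) then 1 else 0) -
    (cubeMeasure m d x).real (anchoredBox d (corner m d c))

lemma measurable_cind (m d : ℕ) (x : Fin d → Fin m) (c : Fin d → Bool) :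
    Measurable (cind m d x c) :=
  (Measurable.ite (measurableSet_anchoredBox _ _) measurable_const measurable_const).sub_const _

lemma jdisc_corner (m d : ℕ) (hm : 2 ≤ m) (c : Fin d → Bool)
    (P : (Fin d → Fin m) → (Fin d → ℝ)) :
    jdisc m d P (anchoredBox d (corner m d c)) = ∑ x, cind m d x c (P x) := by
  rw [jdisc_eq_sum, sum_cubeMeasure m d hm _ (measurableSet_anchoredBox _ _), ← Finset.sum_sub_distrib]
  · rfl
  · intro p hp i
    have := hp i (Set.mem_univ i)
    exact ⟨this.1, this.2.trans (corner_mem m d hm c i).2⟩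

lemma integral_box (m d : ℕ) (x : Fin d → Fin m) {A : Set (Fin d → ℝ)} (hA : MeasurableSet A)
    [DecidablePred (· ∈ A)] :
    ∫ p, (if p ∈ A then (1:ℝ) else 0) ∂(cubeMeasure m d x) = (cubeMeasure m d x).real A := by
  rw [← integral_indicator_one hA]
  congr 1
  funext p
  simp [Set.indicator]

lemma integrable_box (m d : ℕ) (hm : 2 ≤ m) (x : Fin d → Fin m) {A : Set (Fin d → ℝ)}
    (hA : MeasurableSet A) [DecidablePred (· ∈ A)] :
    Integrable (fun p => (if p ∈ A then (1:ℝ) else 0)) (cubeMeasure m d x) := by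
  have := cubeMeasure_prob m d hm x
  refine Integrable.of_bound (C := 1)
    (Measurable.ite hA measurable_const measurable_const).aestronglyMeasurable ?_
  exact Filter.Eventually.of_forall fun p => by split_ifs <;> simp

lemma integral_cind (m d : ℕ) (hm : 2 ≤ m) (x : Fin d → Fin m) (c : Fin d → Bool) :
    ∫ p, cind m d x c p ∂(cubeMeasure m d x) = 0 := by
  classical
  have := cubeMeasure_prob m d hm x
  unfold cind
  rw [integral_sub (integrable_box m d hm x (measurableSet_anchoredBox _ _)) (integrable_const _),
    integral_box m d x (measurableSet_anchoredBox _ _)]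
  simp

lemma integral_sgn (m d : ℕ) (hm : 2 ≤ m) (i : Fin d) (x : Fin d → Fin m) (hx : x ∈ slab m d i) :
    ∫ p, sgn m d i p ∂(cubeMeasure m d x) = 0 := by
  classical
  have := cubeMeasure_prob m d hm x
  have hA : MeasurableSet {p : Fin d → ℝ | p i < midpt m} :=
    measurableSet_lt (measurable_pi_apply i) measurable_const
  have h : ∀ p, sgn m d i p = 2 * (if p ∈ {p : Fin d → ℝ | p i < midpt m} then (1:ℝ) else 0) - 1 := by
    intro p; simp only [sgn, Set.mem_ofPred_eq]; split_ifs <;> norm_num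
  have hh := cubeMeasure_half m d hm x i
  have hxi : (x i : ℕ) = m - 1 := by simp only [slab, Finset.mem_filter] at hx; exact hx.2.1
  rw [hxi] at hh
  simp only [h]
  rw [integral_sub ((integrable_box m d hm x hA).const_mul 2) (integrable_const _),
    integral_const_mul, integral_box m d x hA]
  unfold midpt
  rw [hh]; simp

lemma cind_of_ae (m d : ℕ) (x : Fin d → Fin m) (c : Fin d → Bool) (f : (Fin d → ℝ) → ℝ)
    (a : ℝ) (hf0 : ∫ p, f p ∂(cubeMeasure m d x) = a)
    (hf : ∀ p ∈ jitterCube m d x,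
      (∀ _ : Decidable (p ∈ anchoredBox d (corner m d c)),
        (if p ∈ anchoredBox d (corner m d c) then (1:ℝ) else 0) = f p)) :
    ∀ᵐ p ∂(cubeMeasure m d x), cind m d x c p = f p - a := by
  classical
  have : (cubeMeasure m d x).real (anchoredBox d (corner m d c)) = a := by
    rw [← integral_box m d x (measurableSet_anchoredBox _ _), ← hf0]
    refine integral_congr_ae ?_
    filter_upwards [cubeMeasure_ae m d x] with p hp
    exact hf p hp _
  filter_upwards [cubeMeasure_ae m d x] with p hp
  rw [cind, this, hf p hp]

lemma cube_lt_corner (m d : ℕ) (hm : 2 ≤ m) (x : Fin d → Fin m) (c : Fin d → Bool)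
    (p : Fin d → ℝ) (hp : p ∈ jitterCube m d x) (i : Fin d) (hx : (x i : ℕ) ≠ m - 1) :
    p i < corner m d c i := by
  have hm0 : (0:ℝ) < m := by exact_mod_cast (by omega : 0 < m)
  have h := (hp i (Set.mem_univ i)).2
  have h2 : (x i : ℝ) / m + 1 / m ≤ ((m - 1 : ℕ) : ℝ) / m := by
    rw [← add_div]
    gcongr
    have := (x i).2
    exact_mod_cast (by omega : (x i : ℕ) + 1 ≤ m - 1)
  have h3 : ((m - 1 : ℕ) : ℝ) / m ≤ corner m d c i := by
    have : 0 < 1 / (2 * (m:ℝ)) := by positivity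
    simp only [corner, midpt]; split_ifs <;> linarith
  exact h.trans_le (h2.trans h3)

lemma cube_nonneg (m d : ℕ) (x : Fin d → Fin m)
    (p : Fin d → ℝ) (hp : p ∈ jitterCube m d x) (i : Fin d) : 0 ≤ p i :=
  le_trans (by positivity) (hp i (Set.mem_univ i)).1

lemma cind_slab (m d : ℕ) (hm : 2 ≤ m) (i : Fin d) (x : Fin d → Fin m) (c : Fin d → Bool)
    (hx : x ∈ slab m d i) :
    ∀ᵐ p ∂(cubeMeasure m d x), cind m d x c p = if c i then sgn m d i p / 2 else 0 := by
  have := cubeMeasure_prob m d hm x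
  simp only [slab, Finset.mem_filter, Finset.mem_univ, true_and] at hx
  have hx' : x ∈ slab m d i := by simpa [slab] using hx
  by_cases hc : c i
  · have hints : Integrable (sgn m d i) (cubeMeasure m d x) :=
      Integrable.of_bound (C := 1) (measurable_sgn m d i).aestronglyMeasurable
        (Filter.Eventually.of_forall fun p => (abs_sgn m d i p).le)
    have := cind_of_ae m d x c (fun p => sgn m d i p / 2 + 1 / 2) (1/2) (by
      rw [integral_add (hints.div_const 2) (integrable_const _), integral_div,
        integral_sgn m d hm i x hx']
      simp) (fun p hp _ => by
        by_cases hlt : p i < midpt m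
        · rw [if_pos]
          · rw [sgn, if_pos hlt]; norm_num
          · intro j _
            refine ⟨cube_nonneg m d x p hp j, ?_⟩
            by_cases hj : j = i
            · subst hj; simpa [corner, hc] using hlt
            · exact cube_lt_corner m d hm x c p hp j (hx.2 j hj)
        · rw [if_neg]
          · rw [sgn, if_neg hlt]; norm_num
          · intro h
            have := (h i (Set.mem_univ i)).2
            simp only [corner, hc, if_true] at this
            exact hlt this)
    filter_upwards [this] with p hp
    rw [hp, if_pos hc]; ring
  · have := cind_of_ae m d x c (fun _ => 0) 0 (by simp) (fun p hp _ => by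
      rw [if_neg]
      intro h
      have h1 := (h i (Set.mem_univ i)).2
      have h2 := (hp i (Set.mem_univ i)).1
      rw [hx.1] at h2
      simp only [corner, hc] at h1
      exact absurd h1 (not_lt.2 h2))
    filter_upwards [this] with p hp
    rw [hp, if_neg hc]; simp

lemma abs_cind_le (m d : ℕ) (hm : 2 ≤ m) (x : Fin d → Fin m) (c : Fin d → Bool) (p : Fin d → ℝ) :
    |cind m d x c p| ≤ 1 := by
  have := cubeMeasure_prob m d hm x
  have h1 : (cubeMeasure m d x).real (anchoredBox d (corner m d c)) ≤ 1 := measureReal_le_one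
  have h0 : 0 ≤ (cubeMeasure m d x).real (anchoredBox d (corner m d c)) := measureReal_nonneg
  unfold cind
  rw [abs_le]
  split_ifs <;> constructor <;> linarith

lemma cind_choice_eq_sum (m d : ℕ) (x : Fin d → Fin m) (P : (Fin d → Fin m) → (Fin d → ℝ)) :
    cind m d x (choice m d P) (P x) =
      ∑ c, (if choice m d P = c then (1:ℝ) else 0) * cind m d x c (P x) := by
  simp

lemma measurable_ind_choice (m d : ℕ) (c : Fin d → Bool) :
    Measurable fun P => (if choice m d P = c then (1:ℝ) else 0) :=
  Measurable.ite (measurable_choice m d (measurableSet_singleton c)) measurable_const measurable_const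

lemma measurable_cind_choice (m d : ℕ) (x : Fin d → Fin m) :
    Measurable fun P => cind m d x (choice m d P) (P x) := by
  simp only [cind_choice_eq_sum]
  exact Finset.measurable_sum _ fun c _ => (measurable_ind_choice m d c).mul
    ((measurable_cind m d x c).comp (measurable_pi_apply x))

lemma choice_update (m d : ℕ) (x : Fin d → Fin m) (hx : ∀ i, x ∉ slab m d i)
    (P : (Fin d → Fin m) → (Fin d → ℝ)) (p : Fin d → ℝ) :
    choice m d (Function.update P x p) = choice m d P := by
  funext i
  have : imb m d i (Function.update P x p) = imb m d i P := by
    refine Finset.sum_congr rfl fun y hy => ?_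
    rw [Function.update_of_ne]
    rintro rfl
    exact hx i hy
  simp only [choice, this]

lemma integral_cind_outside (m d : ℕ) (hm : 2 ≤ m) (x : Fin d → Fin m)
    (hx : ∀ i, x ∉ slab m d i) :
    ∫ P, cind m d x (choice m d P) (P x) ∂(Measure.pi (cubeMeasure m d)) = 0 := by
  have := cubeMeasure_prob m d hm
  simp only [cind_choice_eq_sum]
  rw [integral_finsetSum]
  · refine Finset.sum_eq_zero fun c _ => ?_
    refine integral_indep_zero (cubeMeasure m d) x
      (fun P => (if choice m d P = c then (1:ℝ) else 0)) (measurable_ind_choice m d c) ?_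
      (cind m d x c) (measurable_cind m d x c) (integral_cind m d hm x c)
    intro P p
    simp only [choice_update m d x hx]
  · intro c _
    refine Integrable.of_bound (C := 1) ((measurable_ind_choice m d c).mul
      ((measurable_cind m d x c).comp (measurable_pi_apply x))).aestronglyMeasurable ?_
    refine Filter.Eventually.of_forall fun P => ?_
    have := abs_cind_le m d hm x c (P x)
    rw [Real.norm_eq_abs, abs_mul]
    split_ifs <;> simp [this]

lemma integrable_slab (m d : ℕ) (hm : 2 ≤ m) (i : Fin d) (x : Fin d → Fin m) :
    Integrable (fun P => if choice m d P i then sgn m d i (P x) / 2 else 0)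
      (Measure.pi (cubeMeasure m d)) := by
  have := cubeMeasure_prob m d hm
  refine Integrable.of_bound (C := 1) (Measurable.ite ?_ (((measurable_sgn m d i).comp
    (measurable_pi_apply x)).div_const 2) measurable_const).aestronglyMeasurable ?_
  · exact ((measurable_pi_apply i).comp (measurable_choice m d)) (measurableSet_singleton true)
  · refine Filter.Eventually.of_forall fun P => ?_
    have := abs_sgn m d i (P x)
    rw [Real.norm_eq_abs]
    split_ifs
    · rw [abs_div, this]; norm_num
    · simp

lemma integral_cind_slab (m d : ℕ) (hm : 2 ≤ m) (i : Fin d) (x : Fin d → Fin m)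
    (hx : x ∈ slab m d i) :
    ∫ P, cind m d x (choice m d P) (P x) ∂(Measure.pi (cubeMeasure m d)) =
    ∫ P, (if choice m d P i then sgn m d i (P x) / 2 else 0) ∂(Measure.pi (cubeMeasure m d)) := by
  have := cubeMeasure_prob m d hm
  refine integral_congr_ae ?_
  have h : ∀ᵐ P ∂(Measure.pi (cubeMeasure m d)), ∀ c,
      cind m d x c (P x) = if c i then sgn m d i (P x) / 2 else 0 := by
    rw [ae_all_iff]
    intro c
    exact (Measure.quasiMeasurePreserving_eval (cubeMeasure m d) x).ae (cind_slab m d hm i x c hx)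
  filter_upwards [h] with P hP
  exact hP _

lemma integral_slab_sum (m d : ℕ) (hm : 2 ≤ m) (i : Fin d) :
    Real.sqrt ((slab m d i).card) / 24 ≤
    ∑ x ∈ slab m d i, ∫ P, cind m d x (choice m d P) (P x) ∂(Measure.pi (cubeMeasure m d)) := by
  have := cubeMeasure_prob m d hm
  rw [Finset.sum_congr rfl fun x hx => integral_cind_slab m d hm i x hx,
    ← integral_finsetSum _ fun x _ => integrable_slab m d hm i x]
  have hpt : ∀ P : (Fin d → Fin m) → (Fin d → ℝ),
      (∑ x ∈ slab m d i, if choice m d P i then sgn m d i (P x) / 2 else 0) =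
      (|imb m d i P| + imb m d i P) / 4 := by
    intro P
    by_cases h : 0 < imb m d i P
    · simp only [choice, h, decide_true, if_true]
      rw [abs_of_pos h, ← Finset.sum_div]
      change imb m d i P / 2 = _
      ring
    · simp only [choice, h, decide_false]
      rw [abs_of_nonpos (not_lt.1 h)]
      simp
  simp only [hpt]
  have hsint : ∀ x, Integrable (fun P : (Fin d → Fin m) → (Fin d → ℝ) => sgn m d i (P x))
      (Measure.pi (cubeMeasure m d)) := fun x =>
    Integrable.of_bound (C := 1)
      ((measurable_sgn m d i).comp (measurable_pi_apply x)).aestronglyMeasurable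
      (Filter.Eventually.of_forall fun P => (abs_sgn m d i (P x)).le)
  have h_intble : Integrable (imb m d i) (Measure.pi (cubeMeasure m d)) :=
    integrable_finsetSum _ fun x _ => hsint x
  have h0 : ∫ P, imb m d i P ∂(Measure.pi (cubeMeasure m d)) = 0 := by
    unfold imb
    rw [integral_finsetSum _ fun x _ => hsint x]
    refine Finset.sum_eq_zero fun x hx => ?_
    have := integral_indep_zero (cubeMeasure m d) x (fun _ => 1) measurable_const (fun _ _ => rfl)
      (sgn m d i) (measurable_sgn m d i) (integral_sgn m d hm i x hx)
    simpa using this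
  rw [integral_div, integral_add h_intble.abs h_intble, h0]
  have hk := khinchine_pi (cubeMeasure m d) (slab m d i) (sgn m d i) (measurable_sgn m d i)
    (fun p => by unfold sgn; split_ifs <;> simp) (fun x hx => integral_sgn m d hm i x hx)
  change _ ≤ ∫ P, |imb m d i P| ∂_ at hk
  linarith

lemma slab_disjoint (m d : ℕ) :
    Set.PairwiseDisjoint (Finset.univ : Finset (Fin d)) (slab m d) := by
  intro i _ j _ hij
  refine Finset.disjoint_left.2 fun x hx hy => ?_
  simp only [slab, Finset.mem_filter, Finset.mem_univ, true_and] at hx hy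
  exact hy.2 i hij hx.1

lemma exp_lower (m d : ℕ) (hm : 2 ≤ m) :
    d * (Real.sqrt (((m - 1) ^ (d - 1) : ℕ) : ℝ) / 24) ≤ expStarDisc m d := by
  classical
  have hprob := cubeMeasure_prob m d hm
  change _ ≤ ∫ P, starDisc m d P ∂(Measure.pi (cubeMeasure m d))
  have hci : ∀ x, Integrable (fun P => cind m d x (choice m d P) (P x))
      (Measure.pi (cubeMeasure m d)) := fun x =>
    Integrable.of_bound (C := 1) (measurable_cind_choice m d x).aestronglyMeasurable
      (Filter.Eventually.of_forall fun P => abs_cind_le m d hm x _ _)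
  have h1 : ∫ P, ∑ x, cind m d x (choice m d P) (P x) ∂(Measure.pi (cubeMeasure m d)) ≤
      ∫ P, starDisc m d P ∂(Measure.pi (cubeMeasure m d)) := by
    refine integral_mono (integrable_finsetSum _ fun x _ => hci x) ?_ fun P => ?_
    · refine Integrable.of_bound (C := (m:ℝ)^d) (measurable_starDisc m d).aestronglyMeasurable ?_
      refine Filter.Eventually.of_forall fun P => ?_
      rw [Real.norm_eq_abs, abs_of_nonneg (starDisc_bounds m d P).1]
      exact (starDisc_bounds m d P).2
    · simp only [← jdisc_corner m d hm]
      exact (le_abs_self _).trans (le_ciSup (bdd_jdisc m d P)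
        ⟨corner m d (choice m d P), corner_mem m d hm _⟩)
  refine le_trans ?_ h1
  rw [integral_finsetSum _ fun x _ => hci x]
  rw [← Finset.sum_subset (Finset.subset_univ (Finset.univ.biUnion (slab m d)))
    (fun x _ hx => integral_cind_outside m d hm x (by simpa using hx)),
    Finset.sum_biUnion (slab_disjoint m d)]
  calc _ = ∑ i : Fin d, Real.sqrt ((slab m d i).card) / 24 := by
        simp only [card_slab m d hm]; simp
    _ ≤ _ := Finset.sum_le_sum fun i _ => integral_slab_sum m d hm i

lemma card_cast (m d : ℕ) (hm : 2 ≤ m) (hd : 2 ≤ d) :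
    Real.sqrt (((m - 1) ^ (d - 1) : ℕ) : ℝ) = ((m : ℝ) - 1) ^ (((d : ℝ) - 1) / 2) := by
  have h1 : (0:ℝ) ≤ (m:ℝ) - 1 := by
    have : (2:ℝ) ≤ m := by exact_mod_cast hm
    linarith
  rw [Nat.cast_pow, Nat.cast_sub (by omega), Nat.cast_one, Real.sqrt_eq_rpow, ← Real.rpow_natCast,
    ← Real.rpow_mul h1, Nat.cast_sub (by omega), Nat.cast_one]
  congr 1
  ring

/-- For `m, d ≥ 2` and `N = m^d`, a jittered sampling point set `P` of `N` points in `[0,1)^d`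
satisfies `E[D*(P)] ≥ (4/(5·e^(8+1/6)·√(2π)))·exp(−32/(m−1)^((d−1)/2))·d·(m−1)^((d−1)/2)`. -/
theorem jittered_sampling_lower_bound_small_m (m d : ℕ) (hm : 2 ≤ m) (hd : 2 ≤ d) :
    4 / (5 * Real.exp (8 + 1 / 6) * Real.sqrt (2 * Real.pi)) *
        Real.exp (-32 / ((m : ℝ) - 1) ^ (((d : ℝ) - 1) / 2)) *
        d * ((m : ℝ) - 1) ^ (((d : ℝ) - 1) / 2)
      ≤ expStarDisc m d := by
  have h1 := exp_lower m d hm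
  rw [card_cast m d hm hd] at h1
  have hM : (0:ℝ) ≤ ((m : ℝ) - 1) ^ (((d : ℝ) - 1) / 2) :=
    Real.rpow_nonneg (by have : (2:ℝ) ≤ m := by exact_mod_cast hm
                         linarith) _
  refine le_trans ?_ h1
  have he : Real.exp (-32 / ((m : ℝ) - 1) ^ (((d : ℝ) - 1) / 2)) ≤ 1 := by
    rw [Real.exp_le_one_iff]
    exact div_nonpos_of_nonpos_of_nonneg (by norm_num) hM
  have hc : 4 / (5 * Real.exp (8 + 1 / 6) * Real.sqrt (2 * Real.pi)) ≤ 1 / 24 := by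
    have e1 : (20:ℝ) ≤ Real.exp (8 + 1 / 6) := by
      have e2 : (2:ℝ) ≤ Real.exp 1 := by have := Real.add_one_le_exp (1:ℝ); linarith
      calc (20:ℝ) ≤ 2 ^ 8 := by norm_num
        _ ≤ Real.exp 1 ^ 8 := pow_le_pow_left₀ (by norm_num) e2 8
        _ = Real.exp 8 := by rw [← Real.exp_nat_mul]; norm_num
        _ ≤ _ := Real.exp_le_exp.2 (by norm_num)
    have e3 : (1:ℝ) ≤ Real.sqrt (2 * Real.pi) :=
      Real.one_le_sqrt.2 (by linarith [Real.pi_gt_three])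
    rw [div_le_div_iff₀ (by positivity) (by norm_num)]
    nlinarith
  have hc0 : 0 ≤ 4 / (5 * Real.exp (8 + 1 / 6) * Real.sqrt (2 * Real.pi)) := by positivity
  have hd0 : (0:ℝ) ≤ d * ((m : ℝ) - 1) ^ (((d : ℝ) - 1) / 2) := mul_nonneg (Nat.cast_nonneg _) hM
  calc _ = (4 / (5 * Real.exp (8 + 1 / 6) * Real.sqrt (2 * Real.pi)) *
        Real.exp (-32 / ((m : ℝ) - 1) ^ (((d : ℝ) - 1) / 2))) *
        (d * ((m : ℝ) - 1) ^ (((d : ℝ) - 1) / 2)) := by ring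
    _ ≤ (1 / 24 * 1) * (d * ((m : ℝ) - 1) ^ (((d : ℝ) - 1) / 2)) := by
        refine mul_le_mul_of_nonneg_right ?_ hd0
        exact mul_le_mul hc he (Real.exp_pos _).le (by norm_num)
    _ = _ := by ring
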